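/- Equivalence of the Caputo initial value problem with a Volterra integral equation: Let 0 < α < 1, a < b, let y : ℝ → ℝ be differentiable on [a,b] with y' integrable on [a,b] and y(a) = y_a, and let f : ℝ × ℝ → ℝ be such that ᶜD^α y(x) = f(x, y(x)) for all x ∈ (a,b]. Then for every x ∈ [a,b], y(x) = y_a + (1/Γ(α)) ∫_a^x (x−u)^(α−1) · f(u, y(u)) du. -/

import Mathlib

open MeasureTheory Real Set

/-!
The Caputo derivative is the Riemann–Liouville integral `J^(1-α)` of `y'`, so applying `J^α` to the
equation and using `J^α ∘ J^(1-α) = J^1` turns its left-hand side into `∫_a^x y' = y x - y a`.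
The semigroup law `J^α ∘ J^β = J^(α+β)` is Fubini's theorem on the triangle `a < t ≤ u ≤ x`,
where the inner integral `∫_t^x (x-u)^(α-1) (u-t)^(β-1) du` is Euler's beta integral.
-/

/-- The triangle `a < t ≤ u ≤ x` of pairs `(u, t)`, over which iterated Volterra integrals run. -/
def volterraTriangle (a x : ℝ) : Set (ℝ × ℝ) :=
  {p | p.2 ∈ Ioc a p.1 ∧ p.1 ≤ x}

section Triangle

variable {a x : ℝ}

lemma measurableSet_volterraTriangle : MeasurableSet (volterraTriangle a x) := by
  unfold volterraTriangle
  measurability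

lemma indicator_volterraTriangle_left {M : Type*} [Zero M] (F : ℝ → ℝ → M) (u : ℝ) :
    (fun t => (volterraTriangle a x).indicator F.uncurry (u, t)) =
      (Ioc a x).indicator (fun u => (Ioc a u).indicator (F u)) u := by
  ext t
  have hmem : (u, t) ∈ volterraTriangle a x ↔ u ∈ Ioc a x ∧ t ∈ Ioc a u := by
    grind [volterraTriangle]
  by_cases hu : u ∈ Ioc a x <;> simp [indicator, hmem, hu]

lemma indicator_volterraTriangle_right {M : Type*} [Zero M] (F : ℝ → ℝ → M) (t : ℝ) :
    (fun u => (volterraTriangle a x).indicator F.uncurry (u, t)) =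
      (Ioc a x).indicator (fun t => (Icc t x).indicator (F · t)) t := by
  ext u
  have hmem : (u, t) ∈ volterraTriangle a x ↔ t ∈ Ioc a x ∧ u ∈ Icc t x := by
    grind [volterraTriangle]
  by_cases ht : t ∈ Ioc a x <;> simp [indicator, hmem, ht]

variable {E : Type*} [NormedAddCommGroup E] {F : ℝ → ℝ → E}
  {μ : Measure ℝ} [SFinite μ] [NullSingletonClass μ]

lemma integrableOn_volterraTriangle
    (hmeas : AEStronglyMeasurable F.uncurry ((μ.prod μ).restrict (volterraTriangle a x)))
    (hslice : ∀ᵐ t ∂μ.restrict (Ioc a x), IntegrableOn (F · t) (Ioc t x) μ)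
    (hnorm : IntegrableOn (fun t => ∫ u in Ioc t x, ‖F u t‖ ∂μ) (Ioc a x) μ) :
    IntegrableOn F.uncurry (volterraTriangle a x) (μ.prod μ) := by
  rw [← integrable_indicator_iff measurableSet_volterraTriangle,
    integrable_prod_iff' ((aestronglyMeasurable_indicator_iff measurableSet_volterraTriangle).2
      hmeas)]
  refine ⟨?_, ((integrable_indicator_iff measurableSet_Ioc).2 hnorm).congr (.of_forall fun t => ?_)⟩
  · filter_upwards [(ae_restrict_iff' measurableSet_Ioc).1 hslice] with t ht
    rw [indicator_volterraTriangle_right]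
    by_cases hat : t ∈ Ioc a x
    · rw [indicator_of_mem hat, integrable_indicator_iff measurableSet_Icc,
        integrableOn_Icc_iff_integrableOn_Ioc]
      exact ht hat
    · rw [indicator_of_notMem hat]
      exact integrable_zero _ _ _
  · simp only [congrFun (indicator_volterraTriangle_right F t)]
    by_cases hat : t ∈ Ioc a x
    · simp only [indicator_of_mem hat, norm_indicator_eq_indicator_norm]
      rw [integral_indicator measurableSet_Icc, integral_Icc_eq_integral_Ioc]
    · simp [indicator_of_notMem hat]

theorem intervalIntegral_swap_volterraTriangle [NormedSpace ℝ E] (hax : a ≤ x)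
    (hF : IntegrableOn F.uncurry (volterraTriangle a x) (μ.prod μ)) :
    ∫ u in a..x, ∫ t in a..u, F u t ∂μ ∂μ = ∫ t in a..x, ∫ u in t..x, F u t ∂μ ∂μ := by
  have hleft (u : ℝ) : ∫ t, (volterraTriangle a x).indicator F.uncurry (u, t) ∂μ =
      (Ioc a x).indicator (fun u => ∫ t in a..u, F u t ∂μ) u := by
    rw [indicator_volterraTriangle_left]
    by_cases hu : u ∈ Ioc a x
    · simp only [indicator_of_mem hu, integral_indicator measurableSet_Ioc,
        intervalIntegral.integral_of_le hu.1.le]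
    · simp [indicator_of_notMem hu]
  have hright (t : ℝ) : ∫ u, (volterraTriangle a x).indicator F.uncurry (u, t) ∂μ =
      (Ioc a x).indicator (fun t => ∫ u in t..x, F u t ∂μ) t := by
    rw [indicator_volterraTriangle_right]
    by_cases ht : t ∈ Ioc a x
    · simp only [indicator_of_mem ht, integral_indicator measurableSet_Icc,
        integral_Icc_eq_integral_Ioc, intervalIntegral.integral_of_le ht.2]
    · simp [indicator_of_notMem ht]
  rw [intervalIntegral.integral_of_le hax, intervalIntegral.integral_of_le hax,
    ← integral_indicator measurableSet_Ioc, ← integral_indicator measurableSet_Ioc,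
    ← funext hleft, ← funext hright]
  exact integral_integral_swap
    ((integrable_indicator_iff measurableSet_volterraTriangle).2 hF)

end Triangle

section BetaIntegral

variable {α β t x : ℝ}

lemma integral_rpow_mul_sub_rpow (hα : 0 < α) (hβ : 0 < β) (hx : 0 < x) :
    ∫ v in 0..x, v ^ (α - 1) * (x - v) ^ (β - 1) =
      ProbabilityTheory.beta α β * x ^ (α + β - 1) := by
  have hscaled := Complex.betaIntegral_scaled α β hx
  rw [Complex.betaIntegral_eq_Gamma_mul_div _ _ (by simpa) (by simpa)] at hscaled
  apply Complex.ofReal_injective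
  calc ((∫ v in 0..x, v ^ (α - 1) * (x - v) ^ (β - 1) : ℝ) : ℂ)
      = ∫ v in 0..x, (v : ℂ) ^ (α - 1 : ℂ) * ((x : ℂ) - v) ^ (β - 1 : ℂ) := by
        rw [← intervalIntegral.integral_ofReal]
        refine intervalIntegral.integral_congr fun v hv => ?_
        rw [uIcc_of_le hx.le] at hv
        simp [Complex.ofReal_cpow hv.1, Complex.ofReal_cpow (sub_nonneg.2 hv.2)]
    _ = ((ProbabilityTheory.beta α β * x ^ (α + β - 1) : ℝ) : ℂ) := by
        rw [hscaled, ProbabilityTheory.beta]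
        simp [Complex.ofReal_cpow hx.le, ← Complex.Gamma_ofReal, mul_comm]

lemma integral_sub_rpow_mul_sub_rpow (hα : 0 < α) (hβ : 0 < β) (htx : t < x) :
    ∫ u in t..x, (x - u) ^ (α - 1) * (u - t) ^ (β - 1) =
      ProbabilityTheory.beta α β * (x - t) ^ (α + β - 1) := by
  rw [← integral_rpow_mul_sub_rpow hα hβ (sub_pos.2 htx)]
  simpa using intervalIntegral.integral_comp_sub_left
    (fun v => v ^ (α - 1) * (x - t - v) ^ (β - 1)) x (a := t) (b := x)

lemma intervalIntegrable_sub_rpow_mul_sub_rpow (hα : 0 < α) (hβ : 0 < β) (htx : t < x) :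
    IntervalIntegrable (fun u => (x - u) ^ (α - 1) * (u - t) ^ (β - 1)) volume t x := by
  apply intervalIntegral.intervalIntegrable_of_integral_ne_zero
  rw [integral_sub_rpow_mul_sub_rpow hα hβ htx]
  exact (mul_pos (ProbabilityTheory.beta_pos hα hβ) (rpow_pos_of_pos (sub_pos.2 htx) _)).ne'

lemma integral_norm_sub_rpow_mul_sub_rpow_smul {E : Type*} [NormedAddCommGroup E]
    [NormedSpace ℝ E] (hα : 0 < α) (hβ : 0 < β) (htx : t < x) (c : E) :
    ∫ u in Ioc t x, ‖((x - u) ^ (α - 1) * (u - t) ^ (β - 1)) • c‖ =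
      ProbabilityTheory.beta α β * ‖(x - t) ^ (α + β - 1) • c‖ := by
  calc ∫ u in Ioc t x, ‖((x - u) ^ (α - 1) * (u - t) ^ (β - 1)) • c‖
      = ∫ u in Ioc t x, (x - u) ^ (α - 1) * (u - t) ^ (β - 1) * ‖c‖ := by
        refine setIntegral_congr_fun measurableSet_Ioc fun u hu => ?_
        rw [norm_smul, norm_of_nonneg (mul_nonneg (rpow_nonneg (sub_nonneg.2 hu.2) _)
          (rpow_nonneg (sub_nonneg.2 hu.1.le) _))]
    _ = ProbabilityTheory.beta α β * ‖(x - t) ^ (α + β - 1) • c‖ := by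
        rw [integral_mul_const, ← intervalIntegral.integral_of_le htx.le,
          integral_sub_rpow_mul_sub_rpow hα hβ htx, norm_smul,
          norm_of_nonneg (rpow_nonneg (sub_nonneg.2 htx.le) _), mul_assoc]

end BetaIntegral

section RiemannLiouville

variable {E : Type*} [NormedAddCommGroup E] [NormedSpace ℝ E] {α β a x : ℝ} {g h : ℝ → E}

/-- The Riemann–Liouville fractional integral `J^α g` of order `α` with base point `a`. It is only
meaningful for `0 < α` and `a ≤ x`. -/
noncomputable def riemannLiouvilleIntegral (α a : ℝ) (g : ℝ → E) (x : ℝ) : E :=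
  (1 / Gamma α) • ∫ t in a..x, (x - t) ^ (α - 1) • g t

lemma riemannLiouvilleIntegral_one :
    riemannLiouvilleIntegral 1 a g x = ∫ t in a..x, g t := by
  simp [riemannLiouvilleIntegral]

lemma riemannLiouvilleIntegral_congr_ae (hgh : g =ᵐ[volume.restrict (uIoc a x)] h) :
    riemannLiouvilleIntegral α a g x = riemannLiouvilleIntegral α a h x := by
  unfold riemannLiouvilleIntegral
  rw [intervalIntegral.integral_congr_ae_restrict (hgh.mono fun t ht => by rw [ht])]

lemma integrableOn_volterraTriangle_rpow_smul (hα : 0 < α) (hβ : 0 < β)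
    (hg : IntegrableOn (fun t => (x - t) ^ (α + β - 1) • g t) (Ioc a x)) :
    IntegrableOn (Function.uncurry fun u t => ((x - u) ^ (α - 1) * (u - t) ^ (β - 1)) • g t)
      (volterraTriangle a x) := by
  have hlt : ∀ᵐ t ∂volume.restrict (Ioc a x), t < x := by
    rw [← restrict_Ioo_eq_restrict_Ioc]
    exact ae_restrict_of_forall_mem measurableSet_Ioo fun t ht => ht.2
  rw [Measure.volume_eq_prod]
  refine integrableOn_volterraTriangle ?_ ?_ ?_
  · have hg_meas : AEStronglyMeasurable g (volume.restrict (Ioc a x)) :=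
      (aestronglyMeasurable_smul_iff₀
        (Measurable.aestronglyMeasurable (by fun_prop))
        (hlt.mono fun t ht => (rpow_pos_of_pos (sub_pos.2 ht) _).ne')).1 hg.aestronglyMeasurable
    have hsubset : volterraTriangle a x ⊆ univ ×ˢ Ioc a x :=
      fun p hp => ⟨mem_univ _, hp.1.1, hp.1.2.trans hp.2⟩
    have hmono := Measure.restrict_mono_set (volume.prod volume) hsubset
    rw [← Measure.prod_restrict] at hmono
    exact .mono_measure (.smul (Measurable.aestronglyMeasurable (by fun_prop)) hg_meas.comp_snd)
      hmono
  · filter_upwards [hlt] with t ht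
    exact (intervalIntegrable_sub_rpow_mul_sub_rpow hα hβ ht).1.smul_const (g t)
  · refine (hg.norm.const_mul (ProbabilityTheory.beta α β)).congr ?_
    filter_upwards [hlt] with t ht
    exact (integral_norm_sub_rpow_mul_sub_rpow_smul hα hβ ht (g t)).symm

theorem riemannLiouvilleIntegral_comp [CompleteSpace E] (hα : 0 < α) (hβ : 0 < β)
    (hax : a ≤ x)
    (hg : IntegrableOn (fun t => (x - t) ^ (α + β - 1) • g t) (Ioc a x)) :
    riemannLiouvilleIntegral α a (riemannLiouvilleIntegral β a g) x =
      riemannLiouvilleIntegral (α + β) a g x := by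
  have hΓα := (Gamma_pos_of_pos hα).ne'
  have hΓβ := (Gamma_pos_of_pos hβ).ne'
  calc riemannLiouvilleIntegral α a (riemannLiouvilleIntegral β a g) x
      = (1 / Gamma α * (1 / Gamma β)) • ∫ u in a..x, ∫ t in a..u,
          ((x - u) ^ (α - 1) * (u - t) ^ (β - 1)) • g t := by
        simp only [riemannLiouvilleIntegral, mul_smul, intervalIntegral.integral_smul,
          smul_comm _ (1 / Gamma β)]
    _ = (1 / Gamma α * (1 / Gamma β)) • ∫ t in a..x, ∫ u in t..x,
          ((x - u) ^ (α - 1) * (u - t) ^ (β - 1)) • g t := by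
        rw [intervalIntegral_swap_volterraTriangle hax
          (integrableOn_volterraTriangle_rpow_smul hα hβ hg)]
    _ = (1 / Gamma α * (1 / Gamma β)) • ∫ t in a..x,
          ProbabilityTheory.beta α β • (x - t) ^ (α + β - 1) • g t := by
        congr 1
        refine intervalIntegral.integral_congr_Ioo_of_le hax fun t ht => ?_
        rw [intervalIntegral.integral_smul_const, integral_sub_rpow_mul_sub_rpow hα hβ ht.2,
          mul_smul]
    _ = riemannLiouvilleIntegral (α + β) a g x := by
        rw [intervalIntegral.integral_smul, smul_smul, riemannLiouvilleIntegral]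
        congr 1
        rw [ProbabilityTheory.beta]
        field_simp

end RiemannLiouville

section Caputo

variable {E : Type*} [NormedAddCommGroup E] [NormedSpace ℝ E] {α a b x : ℝ} {y : ℝ → E}

/-- The left Caputo fractional derivative `ᶜD^α y` of order `α` with base point `a`, for
`0 < α < 1` and `a ≤ x`. -/
noncomputable def caputoDeriv (α a : ℝ) (y : ℝ → E) (x : ℝ) : E :=
  (1 / Gamma (1 - α)) • ∫ t in a..x, (x - t) ^ (-α) • deriv y t

lemma caputoDeriv_eq_riemannLiouvilleIntegral :
    caputoDeriv α a y = riemannLiouvilleIntegral (1 - α) a (deriv y) := by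
  ext x
  simp [caputoDeriv, riemannLiouvilleIntegral]

theorem riemannLiouvilleIntegral_caputoDeriv [CompleteSpace E] (hα : 0 < α) (hα1 : α < 1)
    (hax : a ≤ x) (hcont : ContinuousOn y (Icc a x))
    (hdiff : ∀ t ∈ Ioo a x, DifferentiableAt ℝ y t)
    (hint : IntervalIntegrable (deriv y) volume a x) :
    riemannLiouvilleIntegral α a (caputoDeriv α a y) x = y x - y a := by
  have hαα : α + (1 - α) = 1 := by ring
  rw [caputoDeriv_eq_riemannLiouvilleIntegral,
    riemannLiouvilleIntegral_comp hα (sub_pos.2 hα1) hax (by simpa [hαα] using hint.1), hαα,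
    riemannLiouvilleIntegral_one]
  exact intervalIntegral.integral_eq_sub_of_hasDerivAt_of_le hax hcont
    (fun t ht => (hdiff t ht).hasDerivAt) hint

theorem caputo_ivp_eq_volterra_general [CompleteSpace E] {f : ℝ → E → E} (hα : 0 < α)
    (hα1 : α < 1) (hcont : ContinuousOn y (Icc a b))
    (hdiff : ∀ x ∈ Ioo a b, DifferentiableAt ℝ y x)
    (hint : IntervalIntegrable (deriv y) volume a b)
    (hode : ∀ᵐ x ∂volume.restrict (Ioc a b), caputoDeriv α a y x = f x (y x)) :
    ∀ x ∈ Icc a b, y x = y a + riemannLiouvilleIntegral α a (fun u => f u (y u)) x := by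
  intro x hx
  have hode_x : ∀ᵐ u ∂volume.restrict (uIoc a x), caputoDeriv α a y u = f u (y u) := by
    rw [uIoc_of_le hx.1]
    exact ae_restrict_of_ae_restrict_of_subset (Ioc_subset_Ioc_right hx.2) hode
  rw [← riemannLiouvilleIntegral_congr_ae hode_x, riemannLiouvilleIntegral_caputoDeriv hα hα1 hx.1
      (hcont.mono (Icc_subset_Icc_right hx.2)) (fun t ht => hdiff t (Ioo_subset_Ioo_right hx.2 ht))
      (hint.mono_set (uIcc_subset_uIcc_left (Icc_subset_uIcc hx))), add_sub_cancel]

end Caputo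

/-- Equivalence of the Caputo initial value problem with a Volterra integral
equation: if `ᶜD^α y x = f x (y x)` on `(a,b]` and `y a = y_a`, then
`y x = y_a + J^α (u ↦ f u (y u)) x` on `[a,b]`. -/
theorem caputo_ivp_eq_volterra
    (α a b y_a : ℝ) (hα : 0 < α) (hα1 : α < 1) (hab : a < b)
    (y : ℝ → ℝ) (f : ℝ → ℝ → ℝ)
    (hdiff : ∀ x ∈ Set.Icc a b, DifferentiableAt ℝ y x)
    (hint : IntervalIntegrable (deriv y) volume a b)
    (hya : y a = y_a)
    (hode : ∀ x ∈ Set.Ioc a b,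
      (1 / Real.Gamma (1 - α)) * ∫ u in a..x, deriv y u * (x - u) ^ (-α) =
        f x (y x)) :
    ∀ x ∈ Set.Icc a b,
      y x = y_a + (1 / Real.Gamma α) *
        ∫ u in a..x, (x - u) ^ (α - 1) * f u (y u) := by
  subst hya
  exact caputo_ivp_eq_volterra_general hα hα1
    (HasDerivAt.continuousOn fun x hx => (hdiff x hx).hasDerivAt)
    (fun x hx => hdiff x (Ioo_subset_Icc_self hx)) hint
    (ae_restrict_of_forall_mem measurableSet_Ioc
      (by simpa only [caputoDeriv, smul_eq_mul, mul_comm] using hode))
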